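/- Let g(z₁,…,zₙ) = Σ_{S ⊆ [n]} c_S Π_{i∈S} z_i be a multiaffine polynomial with complex coefficients that is Γ_α-stable for some α ∈ (0,2]. Then its homogenization g^hom(z₁,…,zₙ,w₁,…,wₙ) = Σ_{S ⊆ [n]} c_S · Π_{i∈S} z_i · Π_{i∉S} w_i is a multiaffine polynomial, homogeneous of degree n, and Γ_{α/2}-stable. -/

import Mathlib

open MvPolynomial Finset

/-- `z` lies in the open sector `Γ_α` of aperture `απ` centered on the positive real axis. -/
def inSector (α : ℝ) (z : ℂ) : Prop := z ≠ 0 ∧ |z.arg| < α * Real.pi / 2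

/-- A complex polynomial is `Γ_α`-stable if it does not vanish when all variables are
assigned values in `Γ_α`. -/
def SectorStable {σ : Type*} (α : ℝ) (g : MvPolynomial σ ℂ) : Prop :=
  ∀ z : σ → ℂ, (∀ i, inSector α (z i)) → MvPolynomial.eval z g ≠ 0

/-- The homogenization `g^hom = Σ_S c_S (Π_{i∈S} z_i)(Π_{i∉S} w_i)` of the multiaffine
polynomial `g = Σ_S c_S z^S`, in `2n` variables `Fin n ⊕ Fin n`. -/
noncomputable def homogenization (n : ℕ) (c : Finset (Fin n) → ℂ) :
    MvPolynomial (Fin n ⊕ Fin n) ℂ :=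
  ∑ S : Finset (Fin n), MvPolynomial.C (c S) *
    ((∏ i ∈ S, MvPolynomial.X (Sum.inl i)) * ∏ i ∈ Sᶜ, MvPolynomial.X (Sum.inr i))

/-- If the multiaffine polynomial `g = Σ_S c_S z^S` is `Γ_α`-stable, then its
homogenization is multiaffine, homogeneous of degree `n`, and `Γ_{α/2}`-stable. -/
theorem homogenization_sectorStable (n : ℕ) (α : ℝ) (hα0 : 0 < α) (hα2 : α ≤ 2)
    (c : Finset (Fin n) → ℂ)
    (hstable : ∀ z : Fin n → ℂ, (∀ i, inSector α (z i)) →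
      (∑ S : Finset (Fin n), c S * ∏ i ∈ S, z i) ≠ 0) :
    (∀ m ∈ (homogenization n c).support, ∀ v, m v ≤ 1) ∧
      (homogenization n c).IsHomogeneous n ∧
      SectorStable (α / 2) (homogenization n c) := by
  refine ⟨?_, ?_, ?_⟩
  · intro m hm v
    refine (monomial_le_degreeOf v hm).trans ?_
    unfold homogenization
    refine (degreeOf_sum_le v _ _).trans (Finset.sup_le fun S _ => ?_)
    refine (degreeOf_C_mul_le _ _ _).trans ((degreeOf_mul_le _ _ _).trans ?_)
    refine (add_le_add (degreeOf_prod_le _ _ _) (degreeOf_prod_le _ _ _)).trans ?_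
    simp only [degreeOf_X]
    rcases v with j | j
    · simp only [Sum.inl.injEq, reduceCtorEq, if_false, Finset.sum_const_zero, add_zero,
        Finset.sum_ite_eq]
      split_ifs <;> simp
    · simp only [Sum.inr.injEq, reduceCtorEq, if_false, Finset.sum_const_zero, zero_add,
        Finset.sum_ite_eq]
      split_ifs <;> simp
  · unfold homogenization
    refine IsHomogeneous.sum _ _ _ fun S _ => IsHomogeneous.C_mul ?_ _
    have h1 := IsHomogeneous.prod S (fun i => (X (Sum.inl i) : MvPolynomial (Fin n ⊕ Fin n) ℂ))
      (fun _ => 1) (fun i _ => isHomogeneous_X _ _)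
    have h2 := IsHomogeneous.prod Sᶜ (fun i => (X (Sum.inr i) : MvPolynomial (Fin n ⊕ Fin n) ℂ))
      (fun _ => 1) (fun i _ => isHomogeneous_X _ _)
    have h3 := h1.mul h2
    rwa [Finset.sum_add_sum_compl, Finset.sum_const, Finset.card_univ, Fintype.card_fin,
      smul_eq_mul, mul_one] at h3
  · intro z hz
    have hw : ∀ i, z (Sum.inr i) ≠ 0 := fun i => (hz _).1
    have key : eval z (homogenization n c) = (∏ i, z (Sum.inr i)) *
        ∑ S : Finset (Fin n), c S * ∏ i ∈ S, (z (Sum.inl i) * (z (Sum.inr i))⁻¹) := by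
      simp only [homogenization, map_sum, map_mul, map_prod, eval_C, eval_X, Finset.mul_sum]
      refine Finset.sum_congr rfl fun S _ => ?_
      rw [← Finset.prod_mul_prod_compl S, Finset.prod_mul_distrib, Finset.prod_inv_distrib]
      have : ∏ i ∈ S, z (Sum.inr i) ≠ 0 := Finset.prod_ne_zero_iff.2 fun i _ => hw i
      field_simp
    rw [key]
    refine mul_ne_zero (Finset.prod_ne_zero_iff.2 fun i _ => hw i) (hstable _ fun i => ?_)
    obtain ⟨h1, h2⟩ := hz (Sum.inl i)
    obtain ⟨h3, h4⟩ := hz (Sum.inr i)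
    refine ⟨mul_ne_zero h1 (inv_ne_zero h3), ?_⟩
    rw [← Complex.abs_arg_inv] at h4
    have hpi : α * Real.pi ≤ 2 * Real.pi := by
      have := Real.pi_pos
      gcongr
    rw [abs_lt] at h2 h4
    rw [Complex.arg_mul h1 (inv_ne_zero h3) ⟨by linarith, by linarith⟩, abs_lt]
    constructor <;> linarith
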